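/- arXiv:2503.20657 — 2 statements merged into one kernel-verified Lean document; each statement's English description precedes it below -/
import Mathlib

section
/- Let X be a real inner product space of dimension 2n, J : X → X a linear isometry with J ∘ J = −id, and V ⊆ X a co-isotropic subspace. Then V splits as an internal direct sum V = K_V(V) ⊕ V^ω, i.e. K_V(V) ∩ V^ω = {0} and K_V(V) + V^ω = V, where K_V(V) denotes the image of the map K_V : V → V, K_V(v) = Π_V(J v). -/
/-!
Since `V^ω = (J V)ᗮ` and `Π_V` is self-adjoint and fixes `V`, a vector of `V` is orthogonal to `J V`
exactly when it is orthogonal to `Π_V (J V) = K_V(V)`. For co-isotropic `V` this identifies `V^ω`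
with the orthogonal complement of `K_V(V)` inside `V`, so the splitting is an orthogonal one.
-/

/-- The symplectic complement `V^ω = {ξ : ∀ v ∈ V, ω(ξ,v) = 0}` of a subspace `V`
of a real inner product space with compatible complex structure `J`, where
`ω(u,v) = ⟪u, J v⟫`. -/
def sympComp {X : Type*} [NormedAddCommGroup X] [InnerProductSpace ℝ X]
    (J : X →ₗ[ℝ] X) (V : Submodule ℝ X) : Submodule ℝ X where
  carrier := {ξ : X | ∀ v ∈ V, (inner ℝ ξ (J v) : ℝ) = 0}
  zero_mem' := by intro v hv; simp
  add_mem' := by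
    intro a b ha hb v hv
    rw [inner_add_left, ha v hv, hb v hv, add_zero]
  smul_mem' := by
    intro c a ha v hv
    rw [real_inner_smul_left, ha v hv, mul_zero]

/-- The map `K_V = Π_V ∘ J`, viewed as an endomorphism of the ambient space
(`Π_V` is the orthogonal projection onto `V`). -/
noncomputable def KV {X : Type*} [NormedAddCommGroup X] [InnerProductSpace ℝ X]
    [FiniteDimensional ℝ X] (J : X →ₗ[ℝ] X) (V : Submodule ℝ X) : X →ₗ[ℝ] X :=
  V.subtype ∘ₗ (Submodule.orthogonalProjectionOnto V).toLinearMap ∘ₗ J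

section Projection

variable {𝕜 E : Type*} [RCLike 𝕜] [NormedAddCommGroup E] [InnerProductSpace 𝕜 E]
  (K U : Submodule 𝕜 E) [K.HasOrthogonalProjection]

theorem map_starProjection_le : U.map K.starProjection.toLinearMap ≤ K :=
  LinearMap.map_le_range.trans K.range_starProjection.le

theorem orthogonal_map_starProjection_inf :
    (U.map K.starProjection.toLinearMap)ᗮ ⊓ K = Uᗮ ⊓ K := by
  ext x
  refine and_congr_left fun hx : x ∈ K ↦ ?_
  have inner_projection (u : E) : inner 𝕜 (K.starProjection u) x = inner 𝕜 u x := by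
    rw [K.inner_starProjection_left_eq_right, K.starProjection_eq_self_iff.mpr hx]
  simp [Submodule.mem_orthogonal, inner_projection]

end Projection

section SymplecticComplement

variable {X : Type*} [NormedAddCommGroup X] [InnerProductSpace ℝ X]
  (J : X →ₗ[ℝ] X) (V : Submodule ℝ X)

theorem sympComp_eq_orthogonal_map : sympComp J V = (V.map J)ᗮ := by
  ext x
  simp [sympComp, Submodule.mem_orthogonal']

theorem sympComp_inf_eq_orthogonal_map_inf [V.HasOrthogonalProjection] :
    sympComp J V ⊓ V = (V.map (V.starProjection.toLinearMap ∘ₗ J))ᗮ ⊓ V := by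
  rw [sympComp_eq_orthogonal_map, Submodule.map_comp, orthogonal_map_starProjection_inf]

/-- `K_V` is written out as `Π_V ∘ J` because `KV` is only defined on finite-dimensional spaces. -/
theorem coisotropic_splitting_general [V.HasOrthogonalProjection]
    [(V.map (V.starProjection.toLinearMap ∘ₗ J)).HasOrthogonalProjection]
    (hco : sympComp J V ≤ V) :
    V.map (V.starProjection.toLinearMap ∘ₗ J) ⊓ sympComp J V = ⊥ ∧
    V.map (V.starProjection.toLinearMap ∘ₗ J) ⊔ sympComp J V = V := by
  have image_le : V.map (V.starProjection.toLinearMap ∘ₗ J) ≤ V :=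
    (V.map_comp _ _).trans_le (map_starProjection_le V (V.map J))
  rw [← inf_eq_left.mpr hco, sympComp_inf_eq_orthogonal_map_inf]
  constructor
  · rw [← inf_assoc, Submodule.inf_orthogonal_eq_bot, bot_inf_eq]
  · exact Submodule.sup_orthogonal_inf_of_hasOrthogonalProjection image_le

end SymplecticComplement

/-- **Corollary B.8.** If `X` has dimension `2n` and `V` is a co-isotropic
subspace, then `V` splits as an internal direct sum `V = K_V(V) ⊕ V^ω`:
the image of `K_V = Π_V ∘ J|_V` and `V^ω` intersect trivially and together
span `V`. -/
theorem coisotropic_splitting {X : Type*} [NormedAddCommGroup X]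
    [InnerProductSpace ℝ X] [FiniteDimensional ℝ X] (n : ℕ)
    (hX : Module.finrank ℝ X = 2 * n)
    (J : X →ₗ[ℝ] X) (hJiso : ∀ x, ‖J x‖ = ‖x‖) (hJ2 : ∀ x, J (J x) = -x)
    (V : Submodule ℝ X) (hco : sympComp J V ≤ V) :
    Submodule.map (KV J V) V ⊓ sympComp J V = ⊥ ∧
    Submodule.map (KV J V) V ⊔ sympComp J V = V :=
  coisotropic_splitting_general J V hco
end

section
/- Let X be a finite-dimensional real inner product space, J : X → X a linear isometry with J ∘ J = −id, and V ⊆ X a co-isotropic subspace. Then K_V acts as J on its own image and as zero on V^ω: for every ξ in the image K_V(V) one has Jξ ∈ V and K_V(ξ) = Jξ, while K_V(ξ) = 0 for every ξ ∈ V^ω. Consequently K_V ∘ K_V = −id on K_V(V), so the nonzero eigenvalues of the complexification of K_V are ±i. -/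
/-!
Since `J` is an isometry with `J² = -1`, the symplectic complement `V^ω` is `J Vᗮ`, so `V` is
co-isotropic exactly when `J` maps `Vᗮ` into `V`. For `v ∈ V` and `ξ = Π_V (J v)` the residual
`J v - ξ` lies in `Vᗮ`, so `J ξ = -v - J (J v - ξ)` lies in `V` and the projection fixes it.
-/

section Compression

variable {𝕜 E : Type*} [RCLike 𝕜] [NormedAddCommGroup E] [InnerProductSpace 𝕜 E]

/-- The compression `Π_V ∘ T` of an operator `T` to a subspace `V`, kept as an endomorphism of
the ambient space. It extends `KV` to infinite-dimensional spaces. -/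
noncomputable def compression (T : E →ₗ[𝕜] E) (V : Submodule 𝕜 E) [V.HasOrthogonalProjection] :
    E →ₗ[𝕜] E :=
  V.starProjection.toLinearMap ∘ₗ T

variable (T : E →ₗ[𝕜] E) (V : Submodule 𝕜 E) [V.HasOrthogonalProjection] (x : E)

theorem compression_apply_mem : compression T V x ∈ V :=
  V.starProjection_apply_mem (T x)

theorem sub_compression_mem_orthogonal : T x - compression T V x ∈ Vᗮ :=
  V.sub_starProjection_mem_orthogonal (T x)

variable {T V x}

theorem compression_apply_eq_apply_iff : compression T V x = T x ↔ T x ∈ V :=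
  Submodule.starProjection_eq_self_iff

theorem compression_apply_eq_zero_iff : compression T V x = 0 ↔ T x ∈ Vᗮ :=
  V.starProjection_apply_eq_zero_iff

theorem apply_compression_mem (hperp : ∀ w ∈ Vᗮ, T w ∈ V) (hx : T (T x) ∈ V) :
    T (compression T V x) ∈ V := by
  have hres : T (T x - compression T V x) ∈ V :=
    hperp _ (sub_compression_mem_orthogonal T V x)
  rwa [map_sub, V.sub_mem_iff_right hx] at hres

theorem KV_eq_compression {X : Type*} [NormedAddCommGroup X] [InnerProductSpace ℝ X]
    [FiniteDimensional ℝ X] (J : X →ₗ[ℝ] X) (V : Submodule ℝ X) : KV J V = compression J V :=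
  rfl

end Compression

section SympComp

variable {X : Type*} [NormedAddCommGroup X] [InnerProductSpace ℝ X]
  {J : X →ₗ[ℝ] X} {V : Submodule ℝ X} {ξ : X}

theorem apply_mem_sympComp_iff (hJiso : ∀ x, ‖J x‖ = ‖x‖) :
    J ξ ∈ sympComp J V ↔ ξ ∈ Vᗮ :=
  calc J ξ ∈ sympComp J V
    _ ↔ ∀ v ∈ V, inner ℝ (J ξ) (J v) = 0 := Iff.rfl
    _ ↔ ∀ v ∈ V, inner ℝ ξ v = 0 := by
      simp only [(LinearMap.norm_map_iff_inner_map_map J).1 hJiso]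
    _ ↔ ξ ∈ Vᗮ := (V.mem_orthogonal' ξ).symm

theorem mem_sympComp_iff_apply_mem_orthogonal (hJiso : ∀ x, ‖J x‖ = ‖x‖)
    (hJ2 : ∀ x, J (J x) = -x) : ξ ∈ sympComp J V ↔ J ξ ∈ Vᗮ := by
  rw [← apply_mem_sympComp_iff hJiso, hJ2, neg_mem_iff]

end SympComp

theorem KV_acts_as_J_on_image_general {X : Type*} [NormedAddCommGroup X]
    [InnerProductSpace ℝ X]
    (J : X →ₗ[ℝ] X) (hJiso : ∀ x, ‖J x‖ = ‖x‖) (hJ2 : ∀ x, J (J x) = -x)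
    (V : Submodule ℝ X) [V.HasOrthogonalProjection] (hco : sympComp J V ≤ V) :
    (∀ ξ ∈ V.map (compression J V), J ξ ∈ V ∧ compression J V ξ = J ξ) ∧
    (∀ ξ ∈ sympComp J V, compression J V ξ = 0) ∧
    (∀ ξ ∈ V.map (compression J V), compression J V (compression J V ξ) = -ξ) := by
  have sq_mem {v : X} (hv : v ∈ V) : J (J v) ∈ V := by
    rw [hJ2]
    exact V.neg_mem hv
  have apply_image_mem : ∀ ξ ∈ V.map (compression J V), J ξ ∈ V := by
    rintro _ ⟨v, hv, rfl⟩
    exact apply_compression_mem (fun w hw ↦ hco ((apply_mem_sympComp_iff hJiso).2 hw)) (sq_mem hv)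
  have eq_on_image : ∀ ξ ∈ V.map (compression J V), compression J V ξ = J ξ :=
    fun ξ hξ ↦ compression_apply_eq_apply_iff.2 (apply_image_mem ξ hξ)
  refine ⟨fun ξ hξ ↦ ⟨apply_image_mem ξ hξ, eq_on_image ξ hξ⟩, fun ξ hξ ↦ ?_, ?_⟩
  · exact compression_apply_eq_zero_iff.2
      ((mem_sympComp_iff_apply_mem_orthogonal hJiso hJ2).1 hξ)
  · rintro _ ⟨v, hv, rfl⟩
    have hξ : compression J V v ∈ V.map (compression J V) := Submodule.mem_map_of_mem hv
    rw [eq_on_image _ hξ, compression_apply_eq_apply_iff.2 (sq_mem (compression_apply_mem J V v)),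
      hJ2]

/-- **Behavior of `K_V` on the splitting `V = K_V(V) ⊕ V^ω`.** If `V` is a
co-isotropic subspace, then `K_V = Π_V ∘ J|_V` acts as `J` on its own image
(and the image is mapped into `V` by `J`), vanishes on `V^ω`, and satisfies
`K_V ∘ K_V = −id` on its image (so the nonzero eigenvalues of its
complexification are `±i`). -/
theorem KV_acts_as_J_on_image {X : Type*} [NormedAddCommGroup X]
    [InnerProductSpace ℝ X] [FiniteDimensional ℝ X]
    (J : X →ₗ[ℝ] X) (hJiso : ∀ x, ‖J x‖ = ‖x‖) (hJ2 : ∀ x, J (J x) = -x)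
    (V : Submodule ℝ X) (hco : sympComp J V ≤ V) :
    (∀ ξ ∈ Submodule.map (KV J V) V, J ξ ∈ V ∧ KV J V ξ = J ξ) ∧
    (∀ ξ ∈ sympComp J V, KV J V ξ = 0) ∧
    (∀ ξ ∈ Submodule.map (KV J V) V, KV J V (KV J V ξ) = -ξ) := by
  rw [KV_eq_compression]
  exact KV_acts_as_J_on_image_general J hJiso hJ2 V hco
end
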